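/- arXiv:2106.08149 — 2 statements merged into one kernel-verified Lean document; each statement's English description precedes it below -/
import Mathlib

section
/- Let X and Y be normed spaces, q > 0, F : X ⇉ Y, and (x̄, ȳ) ∈ gph F. Consider the conditions: (i) F is q-order strongly subregular at (x̄, ȳ); (ii) ‖D_q F(x̄, ȳ)‖⊖_q > 0; (iii) D_q F(x̄, ȳ)⁻¹(0) = {0}. Then (i) ⇒ (ii) ⇒ (iii). If X and Y are finite-dimensional, then (i), (ii) and (iii) are equivalent. -/
/-!
(i) ⇒ (ii): if `y ∈ D_q F(x)` is realised by sequences `u → x`, `v → y`, `t ↓ 0`, then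
subregularity with modulus `τ` at the points `x₀ + t u` reads `τ ‖t u‖ ^ q ≤ ‖t ^ q v‖`;
cancelling `t ^ q` and passing to the limit gives `τ ‖x‖ ^ q ≤ ‖y‖`, so `τ` bounds all the
ratios from below (`StrSubregWith.le_norm_of_mem_gder`).

(ii) ⇒ (iii): a nonzero `x` with `0 ∈ D_q F(x)` would contribute the ratio `0`, while
`0 ∈ D_q F(0)` always holds, by constant sequences.

(iii) ⇒ (i), for `X` finite-dimensional: if every modulus `1 / (n + 1)` fails, there are graph
points `(x n, y n)` with `x n → x₀` and `‖y n - y₀‖ < ‖x n - x₀‖ ^ q / (n + 1)`. Rescaling by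
`t n = ‖x n - x₀‖` gives unit vectors, and by compactness of the unit sphere a subsequence
converges to a unit vector `x` with `0 ∈ D_q F(x)`
(`exists_strSubregWith_of_gder_inv_zero`).
-/

noncomputable section

open Filter Topology Set Pointwise
open scoped ENNReal RealInnerProductSpace

variable {X : Type*} {Y : Type*} [NormedAddCommGroup X] [NormedSpace ℝ X]
  [NormedAddCommGroup Y] [NormedSpace ℝ Y]

/-- A set-valued mapping `H : X ⇉ Y` is `q`-order positively homogeneous if `0 ∈ H 0`
and `H (l • x) = l ^ q • H x` for all `x` and all `l > 0`. -/
def PosHom (q : ℝ) (H : X → Set Y) : Prop :=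
  (0 : Y) ∈ H 0 ∧ ∀ (x : X) (l : ℝ), 0 < l → H (l • x) = (l ^ q) • H x

/-- A single-valued mapping `f : X → Y` is `q`-order positively homogeneous if `f 0 = 0`
and `f (l • x) = l ^ q • f x` for all `x` and all `l > 0`. -/
def PosHomFun (q : ℝ) (f : X → Y) : Prop :=
  f 0 = 0 ∧ ∀ (x : X) (l : ℝ), 0 < l → f (l • x) = (l ^ q) • f x

/-- The inverse of a set-valued mapping. -/
def svInv (H : X → Set Y) : Y → Set X := fun y => {x | y ∈ H x}

/-- `‖H‖⁺_q = sup {‖y‖/‖x‖^q : (x,y) ∈ gph H, (x,y) ≠ (0,0)}`, with `sup ∅ = 0` and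
ratios with `x = 0`, `y ≠ 0` equal to `+∞`. -/
def plusNorm (q : ℝ) (H : X → Set Y) : ℝ≥0∞ :=
  ⨆ (p : X × Y) (_ : p.2 ∈ H p.1 ∧ p ≠ 0),
    ENNReal.ofReal ‖p.2‖ / ENNReal.ofReal (‖p.1‖ ^ q)

/-- `‖H‖⊖_q = inf {‖y‖/‖x‖^q : (x,y) ∈ gph H, (x,y) ≠ (0,0)}`, with `inf ∅ = +∞` and
ratios with `x = 0`, `y ≠ 0` equal to `+∞`. -/
def minusNorm (q : ℝ) (H : X → Set Y) : ℝ≥0∞ :=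
  ⨅ (p : X × Y) (_ : p.2 ∈ H p.1 ∧ p ≠ 0),
    ENNReal.ofReal ‖p.2‖ / ENNReal.ofReal (‖p.1‖ ^ q)

/-- Outer semicontinuity of a set-valued mapping at a point (sequential form). -/
def OuterSemicontAt (H : X → Set Y) (x₀ : X) : Prop :=
  ∀ (u : ℕ → X) (v : ℕ → Y) (y : Y), (∀ k, v k ∈ H (u k)) →
    Tendsto u atTop (𝓝 x₀) → Tendsto v atTop (𝓝 y) → y ∈ H x₀

/-- The `q`-order graphical derivative of `F` at `(x₀, y₀) ∈ gph F`. -/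
def gder (q : ℝ) (F : X → Set Y) (x₀ : X) (y₀ : Y) : X → Set Y := fun x =>
  {y | ∃ (u : ℕ → X) (v : ℕ → Y) (t : ℕ → ℝ),
    Tendsto u atTop (𝓝 x) ∧ Tendsto v atTop (𝓝 y) ∧
    (∀ k, 0 < t k) ∧ Tendsto t atTop (𝓝 0) ∧
    ∀ k, y₀ + (t k ^ q) • v k ∈ F (x₀ + t k • u k)}

/-- `f` is `q`-order Hadamard directionally differentiable at `x₀` with derivative `Df`:
for each `x`, `(f (x₀ + t u) - f x₀) / t ^ q → Df x` as `u → x`, `t ↓ 0`. -/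
def HadamardDeriv (q : ℝ) (f : X → Y) (x₀ : X) (Df : X → Y) : Prop :=
  ∀ x : X, Tendsto (fun p : X × ℝ => ((p.2 ^ q)⁻¹) • (f (x₀ + p.2 • p.1) - f x₀))
    ((𝓝 x) ×ˢ (𝓝[>] (0 : ℝ))) (𝓝 (Df x))

/-- The `q`-order Hadamard directional subderivative
`f'_q(x₀; x) = liminf_{u → x, t ↓ 0} (f (x₀ + t u) - f x₀) / t ^ q`. -/
def subder (q : ℝ) (f : X → EReal) (x₀ : X) (x : X) : EReal :=
  liminf (fun p : X × ℝ => (f (x₀ + p.2 • p.1) - f x₀) / ((p.2 ^ q : ℝ) : EReal))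
    ((𝓝 x) ×ˢ (𝓝[>] (0 : ℝ)))

/-- The nonnegative part of an extended real number, as a value in `[0, +∞]`. -/
def erealPos (x : EReal) : ℝ≥0∞ := if x = ⊤ then ⊤ else ENNReal.ofReal x.toReal

/-- `‖f'_q(x₀; ·)‖_q = inf_{‖x‖ = 1} (f'_q(x₀; x))₊`, with `inf ∅ = +∞`. -/
def subderNorm (q : ℝ) (f : X → EReal) (x₀ : X) : ℝ≥0∞ :=
  ⨅ (x : X) (_ : ‖x‖ = 1), erealPos (subder q f x₀ x)

/-- The epigraphical mapping of `f`. -/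
def epiMap (f : X → EReal) : X → Set ℝ := fun x => {μ : ℝ | f x ≤ (μ : EReal)}

/-- `F` is `q`-order strongly subregular at `(x₀, y₀)` with modulus `τ`. -/
def StrSubregWith (q τ : ℝ) (F : X → Set Y) (x₀ : X) (y₀ : Y) : Prop :=
  ∃ U ∈ 𝓝 x₀, ∃ V ∈ 𝓝 y₀, ∀ x ∈ U,
    ENNReal.ofReal (τ * ‖x - x₀‖ ^ q) ≤ EMetric.infEdist y₀ (F x ∩ V)

/-- `srg_q F (x₀, y₀)`: the supremum of all moduli of `q`-order strong subregularity. -/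
def srgMod (q : ℝ) (F : X → Set Y) (x₀ : X) (y₀ : Y) : ℝ≥0∞ :=
  ⨆ (τ : ℝ) (_ : 0 < τ ∧ StrSubregWith q τ F x₀ y₀), ENNReal.ofReal τ

/-- `S` possesses the `q`-order isolated calmness property at `(y₀, x₀)` with modulus `τ`. -/
def CalmWith (q τ : ℝ) (S : Y → Set X) (y₀ : Y) (x₀ : X) : Prop :=
  ∃ U ∈ 𝓝 x₀, ∃ V ∈ 𝓝 y₀, ∀ y ∈ V, ∀ x ∈ S y, x ∈ U → τ * ‖x - x₀‖ ^ q ≤ ‖y - y₀‖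

/-- `clm_q S (y₀, x₀)`: the supremum of all moduli of `q`-order isolated calmness. -/
def clmMod (q : ℝ) (S : Y → Set X) (y₀ : Y) (x₀ : X) : ℝ≥0∞ :=
  ⨆ (τ : ℝ) (_ : 0 < τ ∧ CalmWith q τ S y₀ x₀), ENNReal.ofReal τ

/-- `x₀` is a `q`-order sharp minimizer of `f` with modulus `τ`. -/
def SharpMinWith (q τ : ℝ) (f : X → EReal) (x₀ : X) : Prop :=
  ∃ U ∈ 𝓝 x₀, ∀ x ∈ U, ((τ * ‖x - x₀‖ ^ q : ℝ) : EReal) ≤ f x - f x₀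

/-- `shrp_q f (x₀)`: the supremum of all moduli of `q`-order sharp minimality. -/
def shrpMod (q : ℝ) (f : X → EReal) (x₀ : X) : ℝ≥0∞ :=
  ⨆ (τ : ℝ) (_ : 0 < τ ∧ SharpMinWith q τ f x₀), ENNReal.ofReal τ

/-- `H : X ⇉ X*` is `q`-order positively definite with modulus `l`:
`⟨x*, x⟩ ≥ l ‖x‖^(q+1)` for all `(x, x*) ∈ gph H`. -/
def PosDefWith (q l : ℝ) (H : X → Set (X →L[ℝ] ℝ)) : Prop :=
  ∀ (x : X), ∀ xs ∈ H x, l * ‖x‖ ^ (q + 1) ≤ xs x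

/-- `‖H‖*_q = inf {⟨x*, x⟩₊ / ‖x‖^(q+1) : (x, x*) ∈ gph H, x ≠ 0}`, with `inf ∅ = +∞`. -/
def starNorm (q : ℝ) (H : X → Set (X →L[ℝ] ℝ)) : ℝ≥0∞ :=
  ⨅ (p : X × (X →L[ℝ] ℝ)) (_ : p.2 ∈ H p.1 ∧ p.1 ≠ 0),
    ENNReal.ofReal (p.2 p.1) / ENNReal.ofReal (‖p.1‖ ^ (q + 1))

/-- The convex subdifferential of `f : X → ℝ ∪ {+∞}` at `x`. -/
def subdiff (f : X → EReal) (x : X) : Set (X →L[ℝ] ℝ) :=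
  {xs | ∀ u : X, ((xs (u - x) : ℝ) : EReal) ≤ f u - f x}

/-- Convexity for extended-real-valued functions. -/
def EConvexOn (f : X → EReal) : Prop :=
  ∀ x y : X, ∀ a b : ℝ, 0 ≤ a → 0 ≤ b → a + b = 1 →
    f (a • x + b • y) ≤ (a : EReal) * f x + (b : EReal) * f y

theorem StrSubregWith.le_norm_of_mem_gder {q τ : ℝ} (hq : 0 < q) {F : X → Set Y} {x₀ : X}
    {y₀ : Y} (h : StrSubregWith q τ F x₀ y₀) {x : X} {y : Y} (hy : y ∈ gder q F x₀ y₀ x) :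
    τ * ‖x‖ ^ q ≤ ‖y‖ := by
  obtain ⟨U, hU, V, hV, hUV⟩ := h
  obtain ⟨u, v, t, hu, hv, ht, ht0, hmem⟩ := hy
  have hxt : Tendsto (fun k => x₀ + t k • u k) atTop (𝓝 x₀) := by
    simpa using (ht0.smul hu).const_add x₀
  have htq : Tendsto (fun k => t k ^ q) atTop (𝓝 0) := by
    simpa [Real.zero_rpow hq.ne'] using ht0.rpow_const (p := q) (Or.inr hq.le)
  have hyt : Tendsto (fun k => y₀ + (t k ^ q) • v k) atTop (𝓝 y₀) := by
    simpa using (htq.smul hv).const_add y₀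
  refine le_of_tendsto_of_tendsto ((hu.norm.rpow_const (Or.inr hq.le)).const_mul τ) hv.norm ?_
  filter_upwards [hxt hU, hyt hV] with k hkU hkV
  have htk : 0 < t k ^ q := Real.rpow_pos_of_pos (ht k) q
  have h1 := (hUV _ hkU).trans (Metric.infEDist_le_edist_of_mem ⟨hmem k, hkV⟩)
  rw [edist_dist, ENNReal.ofReal_le_ofReal_iff dist_nonneg, dist_self_add_right,
    add_sub_cancel_left, norm_smul, norm_smul, Real.norm_of_nonneg (ht k).le,
    Real.norm_of_nonneg htk.le, Real.mul_rpow (ht k).le (norm_nonneg _)] at h1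
  refine le_of_mul_le_mul_left ?_ htk
  linarith

theorem minusNorm_gder_pos_of_strSubregWith {q τ : ℝ} (hq : 0 < q) (hτ : 0 < τ)
    {F : X → Set Y} {x₀ : X} {y₀ : Y} (h : StrSubregWith q τ F x₀ y₀) :
    0 < minusNorm q (gder q F x₀ y₀) := by
  refine (ENNReal.ofReal_pos.2 hτ).trans_le (le_iInf₂ fun p hp => ?_)
  have hle := h.le_norm_of_mem_gder hq hp.1
  rw [ENNReal.le_div_iff_mul_le ?_ (Or.inl ENNReal.ofReal_ne_top),
    ← ENNReal.ofReal_mul hτ.le]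
  · exact ENNReal.ofReal_le_ofReal hle
  -- a vanishing denominator forces `p.1 = 0`, hence a nonzero numerator
  · by_cases hx : p.1 = 0
    · refine Or.inr ?_
      have hy : p.2 ≠ 0 := fun hy => hp.2 (Prod.ext hx hy)
      exact (ENNReal.ofReal_pos.2 (norm_pos_iff.2 hy)).ne'
    · exact Or.inl (ENNReal.ofReal_pos.2 (Real.rpow_pos_of_pos (norm_pos_iff.2 hx) q)).ne'

theorem zero_mem_gder_zero (q : ℝ) {F : X → Set Y} {x₀ : X} {y₀ : Y} (hxy : y₀ ∈ F x₀) :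
    (0 : Y) ∈ gder q F x₀ y₀ 0 :=
  ⟨fun _ => 0, fun _ => 0, fun n => 1 / ((n : ℝ) + 1), tendsto_const_nhds, tendsto_const_nhds,
    fun _ => Nat.one_div_pos_of_nat, tendsto_one_div_add_atTop_nhds_zero_nat,
    fun _ => by simpa using hxy⟩

theorem gder_inv_zero_of_minusNorm_pos {q : ℝ} {F : X → Set Y} {x₀ : X} {y₀ : Y}
    (hxy : y₀ ∈ F x₀) (h : 0 < minusNorm q (gder q F x₀ y₀)) :
    {x : X | (0 : Y) ∈ gder q F x₀ y₀ x} = {0} := by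
  refine Subset.antisymm (fun x hx => ?_) ?_
  · by_contra hne
    have h0 : minusNorm q (gder q F x₀ y₀) ≤ _ :=
      iInf₂_le (x, (0 : Y)) ⟨hx, fun h => hne (congrArg Prod.fst h)⟩
    simp only [norm_zero, ENNReal.ofReal_zero, ENNReal.zero_div] at h0
    exact absurd h h0.not_gt
  · rintro _ rfl
    exact zero_mem_gder_zero q hxy

/-- Only the domain has to be finite-dimensional: the rescaled values tend to `0` in norm, so no
compactness is needed in `Y`. -/
theorem exists_strSubregWith_of_gder_inv_zero [FiniteDimensional ℝ X] {q : ℝ} (hq : 0 < q)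
    {F : X → Set Y} {x₀ : X} {y₀ : Y} (h : {x : X | (0 : Y) ∈ gder q F x₀ y₀ x} = {0}) :
    ∃ τ > 0, StrSubregWith q τ F x₀ y₀ := by
  by_contra hcon
  have key : ∀ n : ℕ, ∃ (x : X) (y : Y), y ∈ F x ∧ ‖x - x₀‖ < 1 / ((n : ℝ) + 1) ∧
      ‖y - y₀‖ < 1 / ((n : ℝ) + 1) * ‖x - x₀‖ ^ q := by
    intro n
    have hn : (0 : ℝ) < 1 / ((n : ℝ) + 1) := Nat.one_div_pos_of_nat
    by_contra! hno
    refine hcon ⟨1 / ((n : ℝ) + 1), hn, Metric.ball x₀ (1 / ((n : ℝ) + 1)),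
      Metric.ball_mem_nhds _ hn, univ, univ_mem, fun x hx => ?_⟩
    refine Metric.le_infEDist.2 fun y hy => ?_
    rw [edist_dist, dist_comm, dist_eq_norm]
    exact ENNReal.ofReal_le_ofReal (hno x y hy.1 (mem_ball_iff_norm.1 hx))
  choose x y hF hx hy using key
  have hpos : ∀ n, 0 < ‖x n - x₀‖ := by
    intro n
    refine (norm_nonneg _).lt_of_ne fun h0 => ?_
    have h1 := hy n
    rw [← h0, Real.zero_rpow hq.ne', mul_zero] at h1
    exact absurd h1 (norm_nonneg _).not_gt
  have hposq : ∀ n, 0 < ‖x n - x₀‖ ^ q := fun n => Real.rpow_pos_of_pos (hpos n) q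
  have ht0 : Tendsto (fun n => ‖x n - x₀‖) atTop (𝓝 0) :=
    squeeze_zero (fun n => norm_nonneg _) (fun n => (hx n).le)
      tendsto_one_div_add_atTop_nhds_zero_nat
  have hv0 : Tendsto (fun n => (‖x n - x₀‖ ^ q)⁻¹ • (y n - y₀)) atTop (𝓝 0) := by
    refine squeeze_zero_norm (fun n => ?_) tendsto_one_div_add_atTop_nhds_zero_nat
    rw [norm_smul, norm_inv, Real.norm_of_nonneg (hposq n).le, inv_mul_le_iff₀ (hposq n),
      mul_comm]
    exact (hy n).le
  have hproper : ProperSpace X := FiniteDimensional.proper ℝ X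
  obtain ⟨a, ha, φ, hφ, hlim⟩ := (isCompact_sphere (0 : X) 1).tendsto_subseq
    (x := fun n => ‖x n - x₀‖⁻¹ • (x n - x₀)) fun n => by
      rw [mem_sphere_zero_iff_norm, norm_smul, norm_inv, norm_norm,
        inv_mul_cancel₀ (hpos n).ne']
  have hmem : a ∈ {x : X | (0 : Y) ∈ gder q F x₀ y₀ x} := by
    refine ⟨_, _, fun n => ‖x (φ n) - x₀‖, hlim, hv0.comp hφ.tendsto_atTop,
      fun n => hpos _, ht0.comp hφ.tendsto_atTop, fun n => ?_⟩
    simpa [smul_smul, (hpos (φ n)).ne', (hposq (φ n)).ne',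
      mul_inv_cancel₀ (hpos (φ n)).ne', mul_inv_cancel₀ (hposq (φ n)).ne'] using hF (φ n)
  rw [h] at hmem
  rw [mem_singleton_iff.1 hmem] at ha
  simp at ha

/-- (i) `q`-order strong subregularity of `F` at `(x₀, y₀)` implies
(ii) `‖D_q F(x₀, y₀)‖⊖_q > 0`, which implies (iii) `D_q F(x₀, y₀)⁻¹(0) = {0}`;
in finite dimensions all three are equivalent. -/
theorem stmt11 (q : ℝ) (hq : 0 < q) (F : X → Set Y) (x₀ : X) (y₀ : Y)
    (hxy : y₀ ∈ F x₀) :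
    ((∃ τ > 0, StrSubregWith q τ F x₀ y₀) → 0 < minusNorm q (gder q F x₀ y₀)) ∧
    (0 < minusNorm q (gder q F x₀ y₀) → {x : X | (0 : Y) ∈ gder q F x₀ y₀ x} = {0}) ∧
    (FiniteDimensional ℝ X → FiniteDimensional ℝ Y →
      (((∃ τ > 0, StrSubregWith q τ F x₀ y₀) ↔ 0 < minusNorm q (gder q F x₀ y₀)) ∧
       (0 < minusNorm q (gder q F x₀ y₀) ↔
         {x : X | (0 : Y) ∈ gder q F x₀ y₀ x} = {0}))) := by
  have h12 : (∃ τ > 0, StrSubregWith q τ F x₀ y₀) → 0 < minusNorm q (gder q F x₀ y₀) :=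
    fun ⟨_, hτ, h⟩ => minusNorm_gder_pos_of_strSubregWith hq hτ h
  have h23 : 0 < minusNorm q (gder q F x₀ y₀) → {x : X | (0 : Y) ∈ gder q F x₀ y₀ x} = {0} :=
    gder_inv_zero_of_minusNorm_pos hxy
  refine ⟨h12, h23, fun _ _ => ?_⟩
  have h31 : {x : X | (0 : Y) ∈ gder q F x₀ y₀ x} = {0} → ∃ τ > 0, StrSubregWith q τ F x₀ y₀ :=
    exists_strSubregWith_of_gder_inv_zero hq
  exact ⟨⟨h12, fun h => h31 (h23 h)⟩, ⟨h23, fun h => h12 (h31 h)⟩⟩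

end
end

section
/- Let X be a finite-dimensional normed space with topological dual X*, q > 0, F : X ⇉ X*, and (x̄, x*) ∈ gph F. Then ‖D_q F(x̄, x*)‖*_q ≤ srg_q F(x̄, x*). As a consequence, if D_q F(x̄, x*) is q-order positively definite with modulus λ > 0, then F is q-order strongly subregular at (x̄, x*) with any modulus τ ∈ (0, λ). -/
/-!
The argument is compactness by blow-up. If strong subregularity with modulus `τ` fails, there are
points `x k → x₀` and `y k ∈ F (x k)` with `‖y k - xs₀‖ < τ * ‖x k - x₀‖ ^ q`. Rescaling by
`t k = ‖x k - x₀‖` gives unit vectors `u k` and functionals `v k` of norm less than `τ`; finite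
dimension yields a limit point `(u, v)` with `v ∈ D_q F(x₀, xs₀)(u)`, `‖u‖ = 1` and `‖v‖ ≤ τ`, so
`⟨v, u⟩ ≤ τ` (`exists_gder_of_not_strSubregWith`). Both claims follow by comparing this pair with
the lower bound on `⟨v, u⟩` given by `‖·‖*_q` or by positive definiteness.
-/

noncomputable section

open Filter Topology Set Pointwise
open scoped ENNReal RealInnerProductSpace

variable {X : Type*} {Y : Type*} [NormedAddCommGroup X] [NormedSpace ℝ X]
  [NormedAddCommGroup Y] [NormedSpace ℝ Y]

/-- If strong subregularity with modulus `τ` fails, the graphical derivative contains a pair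
consisting of a unit vector and a functional whose value at it is at most `τ`. -/
theorem exists_gder_of_not_strSubregWith {q τ : ℝ} (hq : 0 < q) [FiniteDimensional ℝ X]
    {F : X → Set (X →L[ℝ] ℝ)} {x₀ : X} {xs₀ : X →L[ℝ] ℝ}
    (h : ¬ StrSubregWith q τ F x₀ xs₀) :
    ∃ (u : X) (v : X →L[ℝ] ℝ), v ∈ gder q F x₀ xs₀ u ∧ ‖u‖ = 1 ∧ v u ≤ τ := by
  have hk : ∀ k : ℕ, ∃ (x : X) (y : X →L[ℝ] ℝ), y ∈ F x ∧ ‖x - x₀‖ < 1 / ((k : ℝ) + 1) ∧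
      ‖y - xs₀‖ < τ * ‖x - x₀‖ ^ q := by
    intro k
    by_contra hcon
    push Not at hcon
    refine h ⟨Metric.ball x₀ (1 / ((k : ℝ) + 1)), Metric.ball_mem_nhds _ (by positivity),
      univ, univ_mem, fun x hx => ?_⟩
    refine Metric.le_infEDist.2 fun y hy => ?_
    rw [edist_comm, edist_dist, dist_eq_norm]
    exact ENNReal.ofReal_le_ofReal (hcon x y hy.1 (by simpa [dist_eq_norm] using hx))
  choose x y hyF hx hy using hk
  have hpos : ∀ k, 0 < ‖x k - x₀‖ := by
    intro k
    refine (norm_nonneg _).lt_of_ne' fun h0 => ?_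
    have h1 := hy k
    rw [h0, Real.zero_rpow hq.ne', mul_zero] at h1
    exact absurd h1 (norm_nonneg _).not_gt
  have hposq : ∀ k, 0 < ‖x k - x₀‖ ^ q := fun k => Real.rpow_pos_of_pos (hpos k) q
  have ht : Tendsto (fun k => ‖x k - x₀‖) atTop (𝓝 0) :=
    squeeze_zero (fun k => norm_nonneg _) (fun k => (hx k).le)
      tendsto_one_div_add_atTop_nhds_zero_nat
  let w : ℕ → X × (X →L[ℝ] ℝ) := fun k =>
    (‖x k - x₀‖⁻¹ • (x k - x₀), (‖x k - x₀‖ ^ q)⁻¹ • (y k - xs₀))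
  have hw : ∀ k, w k ∈ Metric.sphere (0 : X) 1 ×ˢ Metric.closedBall (0 : X →L[ℝ] ℝ) τ := by
    intro k
    refine ⟨?_, ?_⟩
    · simp [w, norm_smul, (hpos k).ne']
    · rw [mem_closedBall_zero_iff, norm_smul, Real.norm_of_nonneg (inv_pos.2 (hposq k)).le,
        inv_mul_le_iff₀ (hposq k), mul_comm]
      exact (hy k).le
  obtain ⟨⟨u, v⟩, ⟨hu, hv⟩, φ, hφ, hlim⟩ :=
    ((isCompact_sphere (0 : X) 1).prod (isCompact_closedBall (0 : X →L[ℝ] ℝ) τ)).tendsto_subseq hw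
  have hu1 : ‖u‖ = 1 := by simpa using hu
  have hv1 : ‖v‖ ≤ τ := by simpa using hv
  refine ⟨u, v, ⟨fun k => (w (φ k)).1, fun k => (w (φ k)).2, fun k => ‖x (φ k) - x₀‖,
    (continuous_fst.tendsto _).comp hlim, (continuous_snd.tendsto _).comp hlim,
    fun k => hpos _, ht.comp hφ.tendsto_atTop, fun k => ?_⟩, hu1, ?_⟩
  · simpa [w, smul_smul, (hpos (φ k)).ne', (hposq (φ k)).ne'] using hyF (φ k)
  · calc v u ≤ ‖v u‖ := Real.le_norm_self _
      _ ≤ ‖v‖ * ‖u‖ := v.le_opNorm u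
      _ ≤ τ := by rw [hu1, mul_one]; exact hv1

/-- in finite dimensions, `‖D_q F(x₀, xs₀)‖*_q ≤ srg_q F(x₀, xs₀)`;
consequently, if `D_q F(x₀, xs₀)` is `q`-order positively definite with modulus `l > 0`,
then `F` is `q`-order strongly subregular at `(x₀, xs₀)` with any modulus `τ ∈ (0, l)`. -/
theorem stmt14 (q : ℝ) (hq : 0 < q) (hX : FiniteDimensional ℝ X)
    (F : X → Set (X →L[ℝ] ℝ)) (x₀ : X) (xs₀ : X →L[ℝ] ℝ) (hxy : xs₀ ∈ F x₀) :
    starNorm q (gder q F x₀ xs₀) ≤ srgMod q F x₀ xs₀ ∧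
    (∀ l : ℝ, 0 < l → PosDefWith q l (gder q F x₀ xs₀) →
      ∀ τ : ℝ, 0 < τ → τ < l → StrSubregWith q τ F x₀ xs₀) := by
  refine ⟨?_, fun l _ hpd τ _ hτl => ?_⟩
  · refine le_of_forall_lt_imp_le_of_dense fun c hc => ?_
    rcases eq_or_ne c 0 with rfl | hc0
    · exact zero_le
    have hctop : c ≠ ⊤ := (hc.trans_le le_top).ne
    have hsub : StrSubregWith q c.toReal F x₀ xs₀ := by
      by_contra h
      obtain ⟨u, v, hv, hu, hvu⟩ := exists_gder_of_not_strSubregWith hq h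
      have hu0 : u ≠ 0 := norm_ne_zero_iff.1 (by rw [hu]; exact one_ne_zero)
      refine hc.not_ge ((iInf₂_le (u, v) ⟨hv, hu0⟩).trans ?_)
      simpa [hu] using ENNReal.ofReal_le_of_le_toReal hvu
    calc c = ENNReal.ofReal c.toReal := (ENNReal.ofReal_toReal hctop).symm
      _ ≤ srgMod q F x₀ xs₀ :=
        le_iSup₂_of_le c.toReal ⟨ENNReal.toReal_pos hc0 hctop, hsub⟩ le_rfl
  · by_contra h
    obtain ⟨u, v, hv, hu, hvu⟩ := exists_gder_of_not_strSubregWith hq h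
    have h1 := hpd u v hv
    rw [hu, Real.one_rpow, mul_one] at h1
    linarith

end
end
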